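/- Let T be an almost steep rank-one transformation such that ∑_{n=0}^{∞} 1/r_n < ∞. Then T is not rationally weakly mixing: there is no measurable set F with 0 < μ(F) < ∞ such that for all measurable A, B ⊆ F, (1/a_n(F)) ∑_{k=0}^{n−1} |μ(A ∩ T^k B) − μ(A)μ(B) u_k(F)| → 0 as n → ∞. -/

import Mathlib

open MeasureTheory Filter Set Pointwise

/-- A rank-one cutting-and-stacking transformation of a subset `X ⊆ ℝ` (with Lebesgue
measure), given by columns `C n` consisting of `h n` levels (open intervals) of width `w n`,
with `pos n j` the left endpoint of the level of height `j` in column `C n`; column `C (n+1)`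
is obtained from `C n` by cutting into `r n ≥ 2` subcolumns of equal width, adding `s n k`
spacers above the `k`-th subcolumn, and stacking. -/
structure RankOne where
  X : Set ℝ
  T : ℝ ≃ᵐ ℝ
  r : ℕ → ℕ
  s : ℕ → ℕ → ℕ
  h : ℕ → ℕ
  w : ℕ → ℝ
  pos : ℕ → ℕ → ℝ
  hr : ∀ n, 2 ≤ r n
  h0 : h 0 = 1
  w0 : w 0 = 1
  pos0 : pos 0 0 = 0
  hrec : ∀ n, h (n + 1) = ∑ k ∈ Finset.range (r n), (h n + s n k)
  wrec : ∀ n, w (n + 1) = w n / (r n : ℝ)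
  hX : X = ⋃ n, ⋃ j < h n, Set.Ioo (pos n j) (pos n j + w n)
  disj : ∀ n, ∀ j < h n, ∀ j' < h n, j ≠ j' →
    Disjoint (Set.Ioo (pos n j) (pos n j + w n)) (Set.Ioo (pos n j') (pos n j' + w n))
  stack : ∀ n, ∀ j < h n, ∀ k < r n,
    pos (n + 1) ((∑ i ∈ Finset.range k, (h n + s n i)) + j) = pos n j + (k : ℝ) * w (n + 1)
  Tmap : ∀ n j, j + 1 < h n → ∀ x ∈ Set.Ioo (pos n j) (pos n j + w n),
    T x = x + (pos n (j + 1) - pos n j)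
  Tbij : Set.BijOn (⇑T) X X
  Tpres : MeasurePreserving (⇑T) (volume.restrict X) (volume.restrict X)

namespace RankOne

/-- The level of height `j` in column `C n`. -/
def lvl (S : RankOne) (n j : ℕ) : Set ℝ := Set.Ioo (S.pos n j) (S.pos n j + S.w n)

/-- The measure on the space: Lebesgue measure restricted to `X`. -/
noncomputable def μ (S : RankOne) : Measure ℝ := volume.restrict S.X

/-- The intrinsic weight sequence `u n F = μ(F ∩ TⁿF) / μ(F)²`. -/
noncomputable def u (S : RankOne) (F : Set ℝ) (n : ℕ) : ℝ :=
  (S.μ (F ∩ (⇑S.T)^[n] '' F)).toReal / (S.μ F).toReal ^ 2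

/-- `a n F = ∑_{k<n} u k F`. -/
noncomputable def a (S : RankOne) (F : Set ℝ) (n : ℕ) : ℝ :=
  ∑ k ∈ Finset.range n, S.u F k

/-- `T` is normal if spacers are added above the rightmost subcolumn infinitely often. -/
def Normal (S : RankOne) : Prop := ∀ m, ∃ n, m ≤ n ∧ 0 < S.s n (S.r n - 1)

/-- `T` grows exponentially: `2 s_{n, r_n - 1} ≥ h_{n+1}` for every `n`. -/
def ExpGrowing (S : RankOne) : Prop := ∀ n, S.h (n + 1) ≤ 2 * S.s n (S.r n - 1)

/-- `T` has a bounded number of cuts: `sup r_n < ∞`. -/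
def BoundedCuts (S : RankOne) : Prop := ∃ c, ∀ n, S.r n ≤ c

/-- `H n = {0} ∪ {∑_{k≤i} (h n + s n k) : 0 ≤ i < r n - 1}`. -/
def Hset (S : RankOne) (n : ℕ) : Finset ℕ :=
  insert 0 ((Finset.range (S.r n - 1)).image fun i => ∑ k ∈ Finset.range (i + 1), (S.h n + S.s n k))

/-- The set of heights in column `C N` of the descendants of the level of height `p`
in column `C j`: `D(J, N) = p + H j ⊕ H (j+1) ⊕ ⋯ ⊕ H (N-1)`. -/
def desc (S : RankOne) (j p : ℕ) : ℕ → Finset ℕ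
  | 0 => {p}
  | N + 1 => if N < j then {p} else desc S j p N + S.Hset N

/-- `M m`: the maximal height of a descendant of the unit interval `I` in column `C m`. -/
def M (S : RankOne) (m : ℕ) : ℕ := (S.desc 0 0 m).sup id

/-- The ergodic sum `S_n(1_F)(x) = ∑_{k<n} 1_F(T^k x)`. -/
noncomputable def birkhoff (S : RankOne) (F : Set ℝ) (n : ℕ) (x : ℝ) : ℝ :=
  ∑ k ∈ Finset.range n, Set.indicator F (fun _ => (1 : ℝ)) ((⇑S.T)^[k] x)

/-- `T` is rationally weakly mixing on `F`. -/
def RWMOn (S : RankOne) (F : Set ℝ) : Prop :=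
  MeasurableSet F ∧ 0 < S.μ F ∧ S.μ F ≠ ⊤ ∧
  ∀ A B : Set ℝ, MeasurableSet A → A ⊆ F → MeasurableSet B → B ⊆ F →
    Tendsto (fun n => (S.a F n)⁻¹ *
      ∑ k ∈ Finset.range n,
        |(S.μ (A ∩ (⇑S.T)^[k] '' B)).toReal - (S.μ A).toReal * (S.μ B).toReal * S.u F k|)
      atTop (nhds 0)

/-- `T` is rationally weakly mixing. -/
def RWM (S : RankOne) : Prop := ∃ F, S.RWMOn F

/-- `T` is rationally ergodic: some set `F` of positive finite measure satisfies a
Renyi inequality. -/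
def RatErgodic (S : RankOne) : Prop :=
  ∃ (F : Set ℝ) (c : ℝ), MeasurableSet F ∧ 0 < S.μ F ∧ S.μ F ≠ ⊤ ∧
    ∀ n, ∫ x in F, (S.birkhoff F n x) ^ 2 ∂S.μ ≤ c * (∫ x in F, S.birkhoff F n x ∂S.μ) ^ 2

/-- `T` is spectrally weakly mixing: every bounded measurable eigenfunction is a.e. constant. -/
def SpecWM (S : RankOne) : Prop :=
  ∀ (f : ℝ → ℂ) (z : ℂ), Measurable f → (∃ C, ∀ᵐ x ∂S.μ, ‖f x‖ ≤ C) →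
    (∀ᵐ x ∂S.μ, f (S.T x) = z * f x) → ∃ c : ℂ, ∀ᵐ x ∂S.μ, f x = c

/-- `T` is zero-type: `μ(A ∩ TⁿA) → 0` for all `A` of finite measure. -/
def ZeroType (S : RankOne) : Prop :=
  ∀ A : Set ℝ, MeasurableSet A → S.μ A ≠ ⊤ →
    Tendsto (fun n => S.μ (A ∩ (⇑S.T)^[n] '' A)) atTop (nhds 0)

/-- The `i`-th nonzero element of `H n` (for `i < r n - 1`): `e n i = ∑_{k ≤ i} (h n + s n k)`. -/
def e (S : RankOne) (n i : ℕ) : ℕ := ∑ k ∈ Finset.range (i + 1), (S.h n + S.s n k)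

/-- `T` is steep: listing the nonzero elements of `H 0`, then `H 1`, etc., as `t 1, t 2, …`,
each successive element is at least `4` times the previous one. -/
def Steep (S : RankOne) : Prop :=
  (∀ n i, i + 2 < S.r n → 4 * S.e n i ≤ S.e n (i + 1)) ∧
  (∀ n, 4 * S.e n (S.r n - 2) ≤ S.e (n + 1) 0)

/-- `T` is almost steep. -/
def AlmostSteep (S : RankOne) : Prop :=
  ∀ n, 3 ≤ S.r n ∧ S.s n 0 = 0 ∧ S.s n 1 = 1 ∧
    ∀ i, 2 ≤ i → i ≤ S.r n - 1 →
      4 * (∑ k ∈ Finset.range i, (S.h n + S.s n k)) ≤ ∑ k ∈ Finset.range (i + 1), (S.h n + S.s n k)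

/-- `A` is a finite union of levels of `T`. -/
def FinUnionLevels (S : RankOne) (A : Set ℝ) : Prop :=
  ∃ q : Finset (ℕ × ℕ), (∀ v ∈ q, v.2 < S.h v.1) ∧ A = ⋃ v ∈ q, S.lvl v.1 v.2

end RankOne

namespace RankOne

/-- Offset of the `c`-th subcolumn of column `m`. -/
def off (S : RankOne) (m c : ℕ) : ℕ := ∑ i ∈ Finset.range c, (S.h m + S.s m i)

lemma off_succ (S : RankOne) (m c : ℕ) : S.off m (c + 1) = S.off m c + (S.h m + S.s m c) := by
  simp [off, Finset.sum_range_succ]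

lemma off_mono (S : RankOne) (m : ℕ) : Monotone (S.off m) :=
  monotone_nat_of_le_succ fun c => by rw [off_succ]; omega

lemma off_lt (S : RankOne) (m : ℕ) {c c' : ℕ} (h : c < c') : S.off m c + S.h m ≤ S.off m c' := by
  have := S.off_mono m (Nat.succ_le_of_lt h)
  rw [Nat.succ_eq_add_one, off_succ] at this
  omega

lemma h_succ (S : RankOne) (m : ℕ) : S.h (m + 1) = S.off m (S.r m) := S.hrec m

lemma off_steep (S : RankOne) (hst : S.AlmostSteep) (m : ℕ) {c c' : ℕ} (h2 : 2 ≤ c) (h : c < c')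
    (hc' : c' ≤ S.r m) : 4 * S.off m c ≤ S.off m c' := by
  have h1 := (hst m).2.2.2 c h2 (by omega)
  exact h1.trans (S.off_mono m h)

lemma off_two (S : RankOne) (hst : S.AlmostSteep) (m : ℕ) : S.off m 2 = 2 * S.h m + 1 := by
  have h1 := (hst m).2.1
  have h2 := (hst m).2.2.1
  simp [off, Finset.sum_range_succ, h1, h2]; ring

lemma off_last (S : RankOne) (hst : S.AlmostSteep) (m : ℕ) {c : ℕ} (hc : c < S.r m) :
    4 * S.off m c ≤ S.h (m + 1) := by
  rw [h_succ]
  have h3 := (hst m).1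
  rcases le_or_gt 2 c with h | h
  · exact S.off_steep hst m h hc le_rfl
  · have := S.off_steep hst m (c := 2) (c' := S.r m) le_rfl (by omega) le_rfl
    have h4 := S.off_mono m (show c ≤ 2 by omega)
    omega

lemma h_grow (S : RankOne) (hst : S.AlmostSteep) (m : ℕ) : 8 * S.h m + 4 ≤ S.h (m + 1) := by
  have h1 := S.off_last hst m (c := 2) (by have := (hst m).1; omega)
  rw [off_two S hst] at h1
  omega

lemma le_h (S : RankOne) (hst : S.AlmostSteep) (m : ℕ) : m ≤ S.h m := by
  induction m with
  | zero => omega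
  | succ m ih => have := S.h_grow hst m; omega

lemma sep_aux (S : RankOne) (hst : S.AlmostSteep) (m : ℕ) {p q p' q' : ℕ}
    (hqp : q ≤ p) (hqp' : q' ≤ p') (hp : p < S.r m) (hp' : p' < S.r m)
    (hq : 2 ≤ q) (hq' : 2 ≤ q') :
    S.off m p + S.off m q = S.off m p' + S.off m q' ∨
    S.off m p' + S.off m q' + S.h m ≤ S.off m p + S.off m q ∨
    S.off m p + S.off m q + S.h m ≤ S.off m p' + S.off m q' := by
  have e1 := S.off_mono m hqp
  have e2 := S.off_mono m hqp'
  have e3 := S.off_mono m hq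
  have e4 := S.off_mono m hq'
  rw [off_two S hst] at e3 e4
  rcases lt_trichotomy p p' with h | h | h
  · have := S.off_steep hst m (by omega) h hp'.le
    omega
  · subst h
    rcases lt_trichotomy q q' with h | h | h
    · have := S.off_lt m h
      omega
    · subst h; omega
    · have := S.off_lt m h
      omega
  · have := S.off_steep hst m (by omega) h hp.le
    omega

lemma sep (S : RankOne) (hst : S.AlmostSteep) (m : ℕ) {a b c d : ℕ}
    (ha : a < S.r m) (hb : b < S.r m) (hc : c < S.r m) (hd : d < S.r m)
    (ha2 : 2 ≤ a) (hb2 : 2 ≤ b) (hc2 : 2 ≤ c) (hd2 : 2 ≤ d) :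
    S.off m a + S.off m b = S.off m c + S.off m d ∨
    S.off m c + S.off m d + S.h m ≤ S.off m a + S.off m b ∨
    S.off m a + S.off m b + S.h m ≤ S.off m c + S.off m d := by
  rcases le_total a b with h | h <;> rcases le_total c d with h' | h'
  · have := S.sep_aux hst m h h' hb hd ha2 hc2; omega
  · have := S.sep_aux hst m h h' hb hc ha2 hd2; omega
  · have := S.sep_aux hst m h h' ha hd hb2 hc2; omega
  · have := S.sep_aux hst m h h' ha hc hb2 hd2; omega

lemma r_pos (S : RankOne) (m : ℕ) : (0 : ℝ) < S.r m := by
  have := S.hr m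
  exact_mod_cast (by omega : 0 < S.r m)

lemma w_pos (S : RankOne) (m : ℕ) : 0 < S.w m := by
  induction m with
  | zero => rw [S.w0]; norm_num
  | succ m ih => rw [S.wrec]; exact div_pos ih (S.r_pos m)

lemma w_mul (S : RankOne) (m : ℕ) : (S.r m : ℝ) * S.w (m + 1) = S.w m := by
  rw [S.wrec]; have := S.r_pos m; field_simp

lemma w_le (S : RankOne) (m : ℕ) : S.w m ≤ (1 / 2 : ℝ) ^ m := by
  induction m with
  | zero => rw [S.w0]; norm_num
  | succ m ih =>
    have h1 := S.w_mul m
    have h2 : (2 : ℝ) ≤ S.r m := by exact_mod_cast S.hr m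
    have h3 := S.w_pos (m + 1)
    rw [pow_succ]
    nlinarith

lemma pos_off (S : RankOne) {m d c : ℕ} (hd : d < S.h m) (hc : c < S.r m) :
    S.pos (m + 1) (d + S.off m c) = S.pos m d + c * S.w (m + 1) := by
  rw [add_comm d]; exact S.stack m d hd c hc

lemma lt_h_succ (S : RankOne) {m d c : ℕ} (hd : d < S.h m) (hc : c < S.r m) :
    d + S.off m c < S.h (m + 1) := by
  rw [h_succ]
  have := S.off_lt m hc
  omega

lemma iter_lvl (S : RankOne) {m d k : ℕ} (hk : d + k < S.h m) {y : ℝ} (hy : y ∈ S.lvl m d) :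
    (⇑S.T)^[k] y ∈ S.lvl m (d + k) := by
  induction k with
  | zero => simpa using hy
  | succ k ih =>
    have h1 := ih (by omega)
    rw [Function.iterate_succ_apply']
    rw [S.Tmap m (d + k) (by omega) _ h1]
    unfold lvl at h1 ⊢
    rw [← add_assoc]
    constructor <;> linarith [h1.1, h1.2]

lemma lvl_unique (S : RankOne) {m d d' : ℕ} (hd : d < S.h m) (hd' : d' < S.h m) {x : ℝ}
    (hx : x ∈ S.lvl m d) (hx' : x ∈ S.lvl m d') : d = d' := by
  by_contra hne
  exact (Set.disjoint_left.1 (S.disj m d hd d' hd' hne)) hx hx'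

/-- Descendant heights in column `n + i` of the level of height `p` of column `n`. -/
def ds (S : RankOne) (n p : ℕ) : ℕ → Finset ℕ
  | 0 => {p}
  | i + 1 => ((ds S n p i) ×ˢ Finset.range (S.r (n + i))).image
      fun v => v.1 + S.off (n + i) v.2

lemma ds_card (S : RankOne) (n p i : ℕ) : ((S.ds n p i).card : ℝ) * S.w (n + i) ≤ S.w n := by
  induction i with
  | zero => simp [ds]
  | succ i ih =>
    have h1 : (S.ds n p (i + 1)).card ≤ (S.ds n p i).card * S.r (n + i) := by
      refine Finset.card_image_le.trans ?_
      simp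
    have h2 : ((S.ds n p (i + 1)).card : ℝ) ≤ (S.ds n p i).card * S.r (n + i) := by
      exact_mod_cast h1
    have h3 := S.w_mul (n + i)
    have h4 := S.w_pos (n + i + 1)
    rw [← add_assoc]
    calc ((S.ds n p (i + 1)).card : ℝ) * S.w (n + i + 1)
        ≤ ((S.ds n p i).card * S.r (n + i)) * S.w (n + i + 1) := by gcongr
      _ = (S.ds n p i).card * S.w (n + i) := by rw [← h3]; ring
      _ ≤ _ := ih

/-- The points of the level of height `p` lying in one of the first two subcolumns of `C (n+i)`. -/
def bad (S : RankOne) (n p i : ℕ) : Set ℝ :=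
  ⋃ d ∈ S.ds n p i, Set.Ico (S.pos (n + i) d) (S.pos (n + i) d + 2 * S.w (n + i + 1))

lemma bad_meas (S : RankOne) (n p i : ℕ) : MeasurableSet (S.bad n p i) :=
  Finset.measurableSet_biUnion _ fun _ _ => measurableSet_Ico

lemma vol_bad (S : RankOne) (n p i : ℕ) :
    volume (S.bad n p i) ≤ ENNReal.ofReal (2 * S.w n * (S.r (n + i) : ℝ)⁻¹) := by
  refine (measure_biUnion_finset_le _ _).trans ?_
  simp only [Real.volume_Ico, add_sub_cancel_left, Finset.sum_const, nsmul_eq_mul]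
  rw [← ENNReal.ofReal_natCast, ← ENNReal.ofReal_mul (by positivity)]
  apply ENNReal.ofReal_le_ofReal
  have h1 := S.ds_card n p i
  have h2 := S.r_pos (n + i)
  rw [S.wrec]
  calc ((S.ds n p i).card : ℝ) * (2 * (S.w (n + i) / S.r (n + i)))
      = 2 * ((S.ds n p i).card * S.w (n + i)) * (S.r (n + i) : ℝ)⁻¹ := by ring
    _ ≤ _ := by gcongr

/-- The endpoints of all levels. -/
def ends (S : RankOne) : Set ℝ := Set.range fun v : ℕ × ℕ => S.pos v.1 v.2

lemma step (S : RankOne) {n p i d : ℕ} {x : ℝ} (hE : x ∉ S.ends) (hx : x ∈ S.lvl (n + i) d)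
    (hd : d < S.h (n + i)) (hds : d ∈ S.ds n p i) :
    ∃ c < S.r (n + i), (x ∉ S.bad n p i → 2 ≤ c) ∧
      x ∈ S.lvl (n + (i + 1)) (d + S.off (n + i) c) ∧
      d + S.off (n + i) c < S.h (n + (i + 1)) ∧ d + S.off (n + i) c ∈ S.ds n p (i + 1) := by
  have hw := S.w_pos (n + i + 1)
  have hwm := S.w_mul (n + i)
  obtain ⟨hx1, hx2⟩ := hx
  set q := (x - S.pos (n + i) d) / S.w (n + i + 1) with hq
  have hq0 : 0 ≤ q := div_nonneg (by linarith) hw.le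
  have hqx : x = S.pos (n + i) d + q * S.w (n + i + 1) := by
    rw [hq]; field_simp; ring
  have hf1 := Nat.floor_le hq0
  have hf2 := Nat.lt_floor_add_one q
  have hqr : q < S.r (n + i) := by
    rw [hq, div_lt_iff₀ hw, hwm]; linarith
  have hc : ⌊q⌋₊ < S.r (n + i) := (Nat.floor_lt hq0).2 hqr
  have hpos := S.pos_off hd hc
  refine ⟨⌊q⌋₊, hc, ?_, ?_, S.lt_h_succ hd hc, ?_⟩
  · intro hb
    by_contra hlt
    apply hb
    refine Set.mem_iUnion₂.2 ⟨d, hds, hx1.le, ?_⟩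
    have h1 : ((⌊q⌋₊ : ℕ) : ℝ) ≤ 1 := by exact_mod_cast (by omega : ⌊q⌋₊ ≤ 1)
    have : q < 2 := by linarith
    rw [hqx]
    have := mul_lt_mul_of_pos_right this hw
    linarith
  · have hne : S.pos (n + i + 1) (d + S.off (n + i) ⌊q⌋₊) ≠ x := fun h =>
      hE ⟨(n + i + 1, d + S.off (n + i) ⌊q⌋₊), h⟩
    have hle : S.pos (n + i + 1) (d + S.off (n + i) ⌊q⌋₊) ≤ x := by
      rw [hpos]; have := mul_le_mul_of_nonneg_right hf1 hw.le; linarith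
    refine ⟨lt_of_le_of_ne hle hne, ?_⟩
    change x < S.pos (n + i + 1) (d + S.off (n + i) ⌊q⌋₊) + S.w (n + i + 1)
    rw [hpos]
    have := mul_lt_mul_of_pos_right hf2 hw
    linarith
  · exact Finset.mem_image.2 ⟨(d, ⌊q⌋₊), by simp [hds, hc], rfl⟩

/-- State of a point of the level of height `p` at stage `n + i`. -/
def St (S : RankOne) (n p i d : ℕ) (x : ℝ) : Prop :=
  x ∈ S.lvl (n + i) d ∧ d < S.h (n + i) ∧ d ∈ S.ds n p i ∧ (0 < i → 2 * d < S.h (n + i))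

lemma step' (S : RankOne) (hst : S.AlmostSteep) {n p i d : ℕ} {x : ℝ} (hE : x ∉ S.ends)
    (hx : S.St n p i d x) :
    ∃ c < S.r (n + i), (x ∉ S.bad n p i → 2 ≤ c) ∧ S.St n p (i + 1) (d + S.off (n + i) c) x := by
  obtain ⟨h1, h2, h3, -⟩ := hx
  obtain ⟨c, hc, hc2, a1, a2, a3⟩ := S.step hE h1 h2 h3
  refine ⟨c, hc, hc2, a1, a2, a3, fun _ => ?_⟩
  have := S.off_last hst (n + i) hc
  have h5 := S.h_grow hst (n + i)
  rw [← add_assoc]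
  omega

lemma exists_St (S : RankOne) (hst : S.AlmostSteep) {n p : ℕ} (hp : p < S.h n) {x : ℝ}
    (hE : x ∉ S.ends) (hx : x ∈ S.lvl n p) (i : ℕ) : ∃ d, S.St n p i d x := by
  induction i with
  | zero => exact ⟨p, hx, hp, by simp [ds], by simp⟩
  | succ i ih =>
    obtain ⟨d, hd⟩ := ih
    obtain ⟨c, -, -, h⟩ := S.step' hst hE hd
    exact ⟨_, h⟩

lemma forward (S : RankOne) (hst : S.AlmostSteep) {n p i : ℕ} (hi : 0 < i) {x y x' z : ℝ}
    (hE : ∀ v ∈ ({x, y, x', z} : Set ℝ), v ∉ S.ends ∧ ∀ j, i ≤ j → v ∉ S.bad n p j)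
    {d1 d2 d3 d4 : ℕ} (h1 : S.St n p i d1 x) (h2 : S.St n p i d2 y)
    (h3 : S.St n p i d3 x') (h4 : S.St n p i d4 z) (hne : d1 + d4 ≠ d2 + d3) (j : ℕ)
    (hj : i ≤ j) :
    ∃ d1 d2 d3 d4, S.St n p j d1 x ∧ S.St n p j d2 y ∧ S.St n p j d3 x' ∧ S.St n p j d4 z ∧
      d1 + d4 ≠ d2 + d3 := by
  induction j, hj using Nat.le_induction with
  | base => exact ⟨d1, d2, d3, d4, h1, h2, h3, h4, hne⟩
  | succ j hj ih =>
    obtain ⟨d1, d2, d3, d4, h1, h2, h3, h4, hne⟩ := ih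
    obtain ⟨ex, bx⟩ := hE x (by simp)
    obtain ⟨ey, byy⟩ := hE y (by simp)
    obtain ⟨ex', bx'⟩ := hE x' (by simp)
    obtain ⟨ez, bz⟩ := hE z (by simp)
    obtain ⟨c1, u1, v1, w1⟩ := S.step' hst ex h1
    obtain ⟨c2, u2, v2, w2⟩ := S.step' hst ey h2
    obtain ⟨c3, u3, v3, w3⟩ := S.step' hst ex' h3
    obtain ⟨c4, u4, v4, w4⟩ := S.step' hst ez h4
    refine ⟨_, _, _, _, w1, w2, w3, w4, ?_⟩
    have := S.sep hst (n + j) u1 u4 u2 u3 (v1 (bx j hj)) (v4 (bz j hj)) (v2 (byy j hj))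
      (v3 (bx' j hj))
    have q1 := h1.2.2.2 (by omega)
    have q2 := h2.2.2.2 (by omega)
    have q3 := h3.2.2.2 (by omega)
    have q4 := h4.2.2.2 (by omega)
    omega

lemma comb (S : RankOne) (hst : S.AlmostSteep) {n p i k : ℕ} (hi : 0 < i) {x y x' z : ℝ}
    (hE : ∀ v ∈ ({x, y, x', z} : Set ℝ), v ∉ S.ends ∧ ∀ j, i ≤ j → v ∉ S.bad n p j)
    {d1 d2 d3 d4 : ℕ} (h1 : S.St n p i d1 x) (h2 : S.St n p i d2 y)
    (h3 : S.St n p i d3 x') (h4 : S.St n p i d4 z) (hne : d1 + d4 ≠ d2 + d3)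
    (hk : (⇑S.T)^[k] y = x) (hk' : (⇑S.T)^[k] z = x') : False := by
  obtain ⟨d1, d2, d3, d4, h1, h2, h3, h4, hne⟩ :=
    S.forward hst hi hE h1 h2 h3 h4 hne (i + 2 * k) (by omega)
  have hh := S.le_h hst (n + (i + 2 * k))
  have q2 := h2.2.2.2 (by omega)
  have q4 := h4.2.2.2 (by omega)
  have e1 := S.iter_lvl (k := k) (by omega) h2.1
  have e2 := S.iter_lvl (k := k) (by omega) h4.1
  rw [hk] at e1
  rw [hk'] at e2
  have e3 := S.lvl_unique (by omega) h1.2.1 e1 h1.1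
  have e4 := S.lvl_unique (by omega) h3.2.1 e2 h3.1
  omega

lemma ends_null (S : RankOne) : S.μ S.ends = 0 := by
  have h : volume S.ends = 0 := (Set.countable_range _).measure_zero _
  exact le_antisymm ((Measure.restrict_apply_le _ _).trans h.le) bot_le

lemma lvl_meas (S : RankOne) (n j : ℕ) : MeasurableSet (S.lvl n j) := measurableSet_Ioo

lemma exists_sets (S : RankOne) (hst : S.AlmostSteep)
    (hsum : Summable fun n => ((S.r n : ℝ))⁻¹) (F : Set ℝ) (hF : MeasurableSet F)
    (h0 : 0 < S.μ F) :
    ∃ A B : Set ℝ, MeasurableSet A ∧ A ⊆ F ∧ MeasurableSet B ∧ B ⊆ F ∧ 0 < S.μ A ∧ 0 < S.μ B ∧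
      ∀ k, A ∩ (⇑S.T)^[k] '' A = ∅ ∨ A ∩ (⇑S.T)^[k] '' B = ∅ := by
  have hle : ∀ s, S.μ s ≤ volume s := fun s => Measure.restrict_apply_le _ _
  -- a level meeting `F`
  obtain ⟨n, p, hp, hL⟩ : ∃ n p, p < S.h n ∧ 0 < S.μ (F ∩ S.lvl n p) := by
    by_contra hcon
    push Not at hcon
    have hX : S.μ F ≤ S.μ (⋃ n, ⋃ j, ⋃ (_ : j < S.h n), F ∩ S.lvl n j) := by
      have h1 : S.μ F = volume (F ∩ S.X) := Measure.restrict_apply hF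
      have hm : MeasurableSet (⋃ n, ⋃ j, ⋃ (_ : j < S.h n), F ∩ S.lvl n j) :=
        MeasurableSet.iUnion fun n => MeasurableSet.iUnion fun j => MeasurableSet.iUnion fun _ =>
          hF.inter (S.lvl_meas n j)
      have h2 : S.μ (⋃ n, ⋃ j, ⋃ (_ : j < S.h n), F ∩ S.lvl n j)
        = volume ((⋃ n, ⋃ j, ⋃ (_ : j < S.h n), F ∩ S.lvl n j) ∩ S.X) := Measure.restrict_apply hm
      rw [h1, h2]
      apply measure_mono
      rintro x ⟨hx1, hx2⟩
      refine ⟨?_, hx2⟩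
      rw [S.hX] at hx2
      simp only [Set.mem_iUnion] at hx2 ⊢
      obtain ⟨n, j, hj, hx⟩ := hx2
      exact ⟨n, j, hj, hx1, hx⟩
    have : S.μ (⋃ n, ⋃ j, ⋃ (_ : j < S.h n), F ∩ S.lvl n j) = 0 := by
      refine measure_iUnion_null fun n => measure_iUnion_null fun j => measure_iUnion_null fun hj =>
        le_antisymm (hcon n j hj) bot_le
    rw [this] at hX
    exact absurd h0 (not_lt.2 hX)
  -- tail of bad sets is small
  have hs : Summable fun i => 2 * S.w n * (S.r (n + i) : ℝ)⁻¹ := by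
    have := (summable_nat_add_iff n).2 hsum
    simpa [add_comm] using this.mul_left (2 * S.w n)
  have htail := ENNReal.tendsto_sum_nat_add
    (fun i => ENNReal.ofReal (2 * S.w n * (S.r (n + i) : ℝ)⁻¹)) hs.tsum_ofReal_ne_top
  obtain ⟨i0, hi0⟩ := (htail.eventually (gt_mem_nhds hL)).exists
  set Bd : Set ℝ := ⋃ j, S.bad n p (j + i0) with hBd
  have hBdm : MeasurableSet Bd := MeasurableSet.iUnion fun j => S.bad_meas _ _ _
  have hBdv : S.μ Bd < S.μ (F ∩ S.lvl n p) := by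
    refine lt_of_le_of_lt ?_ hi0
    refine (measure_iUnion_le _).trans ?_
    exact ENNReal.tsum_le_tsum fun j => (hle _).trans (S.vol_bad _ _ _)
  have hEm : MeasurableSet S.ends := (Set.countable_range _).measurableSet
  set F1 : Set ℝ := ((F ∩ S.lvl n p) \ Bd) \ S.ends with hF1
  have hF1m : MeasurableSet F1 := ((hF.inter (S.lvl_meas n p)).diff hBdm).diff hEm
  have hF1F : F1 ⊆ F := fun x hx => hx.1.1.1
  have hF1p : 0 < S.μ F1 := by
    rw [hF1, measure_diff_null S.ends_null]
    exact lt_of_lt_of_le (tsub_pos_of_lt hBdv) le_measure_diff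
  -- choose a fine stage
  obtain ⟨i, hi1, hi2, hwi⟩ : ∃ i, i0 ≤ i ∧ 0 < i ∧ ENNReal.ofReal (S.w (n + i)) < S.μ F1 := by
    have ht : Tendsto (fun i : ℕ => ENNReal.ofReal ((1 / 2 : ℝ) ^ (n + i))) atTop (nhds 0) := by
      have h1 : Tendsto (fun m : ℕ => (1 / 2 : ℝ) ^ m) atTop (nhds 0) :=
        tendsto_pow_atTop_nhds_zero_of_lt_one (by norm_num) (by norm_num)
      have h2 := ENNReal.tendsto_ofReal h1
      rw [ENNReal.ofReal_zero] at h2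
      have h3 := (tendsto_add_atTop_iff_nat n).2 h2
      simpa [add_comm] using h3
    obtain ⟨i, hi, hi'⟩ := ((ht.eventually (gt_mem_nhds hF1p)).and
      (eventually_ge_atTop (i0 + 1))).exists
    exact ⟨i, by omega, by omega, lt_of_le_of_lt (ENNReal.ofReal_le_ofReal (S.w_le _)) hi⟩
  have hcov : ∀ x ∈ F1, ∃ d, S.St n p i d x := fun x hx =>
    S.exists_St hst hp hx.2 hx.1.1.2 i
  have key : ∀ G : Set ℝ, G ⊆ F1 → 0 < S.μ G → ∃ d < S.h (n + i), 0 < S.μ (G ∩ S.lvl (n + i) d) := by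
    intro G hG hG0
    by_contra hcon
    push Not at hcon
    have h1 : S.μ G ≤ S.μ (⋃ d, ⋃ (_ : d < S.h (n + i)), G ∩ S.lvl (n + i) d) := by
      apply measure_mono
      intro x hx
      obtain ⟨d, hd⟩ := hcov x (hG hx)
      exact Set.mem_iUnion₂.2 ⟨d, hd.2.1, hx, hd.1⟩
    have h2 : S.μ (⋃ d, ⋃ (_ : d < S.h (n + i)), G ∩ S.lvl (n + i) d) = 0 :=
      measure_iUnion_null fun d => measure_iUnion_null fun hd => le_antisymm (hcon d hd) bot_le
    rw [h2] at h1
    exact absurd hG0 (not_lt.2 h1)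
  obtain ⟨d1, hd1, hA⟩ := key F1 subset_rfl hF1p
  have hrest : 0 < S.μ (F1 \ S.lvl (n + i) d1) := by
    have h1 : S.μ (S.lvl (n + i) d1) ≤ ENNReal.ofReal (S.w (n + i)) := by
      refine (hle _).trans ?_
      simp [lvl]
    exact lt_of_lt_of_le (tsub_pos_of_lt (lt_of_le_of_lt h1 hwi)) le_measure_diff
  obtain ⟨d2, hd2, hB⟩ := key (F1 \ S.lvl (n + i) d1) Set.diff_subset hrest
  have hd12 : d1 ≠ d2 := by
    rintro rfl
    have : (F1 \ S.lvl (n + i) d1) ∩ S.lvl (n + i) d1 = ∅ := by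
      ext x; simp
    rw [this] at hB
    simp at hB
  have hst' : ∀ x ∈ F1, ∀ d < S.h (n + i), x ∈ S.lvl (n + i) d → S.St n p i d x := by
    intro x hx d hd hxd
    obtain ⟨d', hd'⟩ := hcov x hx
    have := S.lvl_unique hd hd'.2.1 hxd hd'.1
    rwa [this]
  have hgood : ∀ v ∈ F1, v ∉ S.ends ∧ ∀ j, i ≤ j → v ∉ S.bad n p j := by
    intro v hv
    refine ⟨hv.2, fun j hj hb => hv.1.2 ?_⟩
    refine Set.mem_iUnion.2 ⟨j - i0, ?_⟩
    rwa [Nat.sub_add_cancel (by omega)]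
  refine ⟨F1 ∩ S.lvl (n + i) d1, (F1 \ S.lvl (n + i) d1) ∩ S.lvl (n + i) d2,
    hF1m.inter (S.lvl_meas _ _), fun x hx => hF1F hx.1,
    (hF1m.diff (S.lvl_meas _ _)).inter (S.lvl_meas _ _), fun x hx => hF1F hx.1.1, hA, hB, ?_⟩
  intro k
  by_contra hcon
  push Not at hcon
  obtain ⟨⟨x, hx, y, hy, hyx⟩, ⟨x', hx', z, hz, hzx⟩⟩ := hcon
  refine S.comb hst (n := n) (p := p) (k := k) hi2 (x := x) (y := y) (x' := x') (z := z) ?_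
    (hst' x hx.1 d1 hd1 hx.2) (hst' y hy.1 d1 hd1 hy.2) (hst' x' hx'.1 d1 hd1 hx'.2)
    (hst' z hz.1.1 d2 hd2 hz.2) (by omega) hyx hzx
  intro v hv
  apply hgood
  simp only [Set.mem_insert_iff, Set.mem_singleton_iff] at hv
  rcases hv with rfl | rfl | rfl | rfl
  exacts [hx.1, hy.1, hx'.1, hz.1.1]

end RankOne

/-- An almost steep rank-one transformation with `∑ 1/r_n < ∞` is not
rationally weakly mixing. -/
theorem statement14 (S : RankOne) (hst : S.AlmostSteep)
    (hsum : Summable fun n => ((S.r n : ℝ))⁻¹) :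
    ¬ S.RWM := by
  rintro ⟨F, hF, h0, hfin, hlim⟩
  obtain ⟨A, B, hAm, hAF, hBm, hBF, hA, hB, hk⟩ := S.exists_sets hst hsum F hF h0
  have hApos : 0 < (S.μ A).toReal :=
    ENNReal.toReal_pos hA.ne' (ne_top_of_le_ne_top hfin (measure_mono hAF))
  have hBpos : 0 < (S.μ B).toReal :=
    ENNReal.toReal_pos hB.ne' (ne_top_of_le_ne_top hfin (measure_mono hBF))
  have hFpos : 0 < (S.μ F).toReal := ENNReal.toReal_pos h0.ne' hfin
  have hadd := (hlim A A hAm hAF hAm hAF).add (hlim A B hAm hAF hBm hBF)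
  rw [add_zero] at hadd
  set α := (S.μ A).toReal
  set β := (S.μ B).toReal
  set c := min (α * α) (α * β) with hc
  have hcpos : 0 < c := lt_min (mul_pos hApos hApos) (mul_pos hApos hBpos)
  have hu : ∀ k, 0 ≤ S.u F k := fun k => by unfold RankOne.u; positivity
  have hev : ∀ᶠ n : ℕ in atTop, c ≤ (S.a F n)⁻¹ *
      ∑ k ∈ Finset.range n,
        |(S.μ (A ∩ (⇑S.T)^[k] '' A)).toReal - α * α * S.u F k| + (S.a F n)⁻¹ *
      ∑ k ∈ Finset.range n,
        |(S.μ (A ∩ (⇑S.T)^[k] '' B)).toReal - α * β * S.u F k| := by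
    filter_upwards [eventually_ge_atTop 1] with n hn
    have hu0 : 0 < S.u F 0 := by
      unfold RankOne.u
      simp only [Function.iterate_zero, Set.image_id, Set.inter_self]
      positivity
    have ha : 0 < S.a F n := by
      unfold RankOne.a
      exact lt_of_lt_of_le hu0 (Finset.single_le_sum (f := fun k => S.u F k) (fun k _ => hu k)
        (Finset.mem_range.2 hn))
    rw [← mul_add, ← Finset.sum_add_distrib, inv_mul_eq_div, le_div_iff₀ ha]
    unfold RankOne.a
    rw [Finset.mul_sum]
    refine Finset.sum_le_sum fun k _ => ?_
    rcases hk k with h | h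
    · rw [h]
      have h1 : c * S.u F k ≤ α * α * S.u F k :=
        mul_le_mul_of_nonneg_right (min_le_left _ _) (hu k)
      have h2 : α * α * S.u F k ≤ |(S.μ (∅ : Set ℝ)).toReal - α * α * S.u F k| := by
        simp only [measure_empty, ENNReal.toReal_zero, zero_sub, abs_neg]
        exact le_abs_self _
      have h3 := abs_nonneg ((S.μ (A ∩ (⇑S.T)^[k] '' B)).toReal - α * β * S.u F k)
      linarith
    · rw [h]
      have h1 : c * S.u F k ≤ α * β * S.u F k :=
        mul_le_mul_of_nonneg_right (min_le_right _ _) (hu k)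
      have h2 : α * β * S.u F k ≤ |(S.μ (∅ : Set ℝ)).toReal - α * β * S.u F k| := by
        simp only [measure_empty, ENNReal.toReal_zero, zero_sub, abs_neg]
        exact le_abs_self _
      have h3 := abs_nonneg ((S.μ (A ∩ (⇑S.T)^[k] '' A)).toReal - α * α * S.u F k)
      linarith
  exact absurd (ge_of_tendsto hadd hev) (not_le.2 hcpos)
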